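/- Let n ≥ 2, let σ be the surface measure on the unit sphere S^{n-1} ⊂ ℝⁿ with N := σ(S^{n-1}), let c, c₁ : S^{n-1} → ℝ be continuous functions such that c satisfies the balance condition ∫_{S^{n-1}} c(w)·w dσ(w) = 0 (the vector-valued integral vanishes), and let φ : ℝⁿ → ℝ be three times continuously differentiable. Define φ₁(x,v) := −c(v)⟨v,∇φ(x)⟩ and φ₂(x,v) := c(v)²·D²φ(x)[v,v] − (1/N)∫_{S^{n-1}} c(w)²·D²φ(x)[w,w] dσ(w), and φ^ε := φ + εφ₁ + ε²φ₂. Then for all x ∈ ℝⁿ, v ∈ S^{n-1}, ε ≠ 0: ε⁻²[ (1/N)∫_{S^{n-1}} φ^ε(x,w)dσ(w) − φ^ε(x,v) ] − ε⁻¹ c(v)⟨v, ∇_xφ^ε(x,v)⟩ − c₁(v)⟨v, ∇_xφ^ε(x,v)⟩ = [ −c₁(v)⟨v,∇φ(x)⟩ + (1/N)∫_{S^{n-1}} c(w)² D²φ(x)[w,w] dσ(w) ] − ε·[ c(v)⟨v, ∇_xφ₂(x,v)⟩ − c₁(v)c(v)D²φ(x)[v,v] ] − ε²·c₁(v)⟨v,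 ∇_xφ₂(x,v)⟩. -/

import Mathlib

open MeasureTheory Real
open scoped InnerProductSpace

/-- Hessian quadratic form `D²φ(x)[v,v]`. -/
noncomputable def hessQF {n : ℕ} (φ : EuclideanSpace ℝ (Fin n) → ℝ)
    (x v : EuclideanSpace ℝ (Fin n)) : ℝ :=
  iteratedFDeriv ℝ 2 φ x ![v, v]

/-- Surface measure on spheres in `ℝⁿ`: the `(n−1)`-dimensional Hausdorff measure. -/
noncomputable def sphMeasure (n : ℕ) : Measure (EuclideanSpace ℝ (Fin n)) :=
  μH[(n : ℝ) - 1]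

/-- Total surface measure `N = σ(S^{n-1})` of the unit sphere. -/
noncomputable def sphN (n : ℕ) : ℝ :=
  (sphMeasure n (Metric.sphere (0 : EuclideanSpace ℝ (Fin n)) 1)).toReal

/-- First corrector `φ₁(x,v) = −c(v)⟨v,∇φ(x)⟩`. -/
noncomputable def phi1 {n : ℕ} (c : EuclideanSpace ℝ (Fin n) → ℝ)
    (φ : EuclideanSpace ℝ (Fin n) → ℝ) (x v : EuclideanSpace ℝ (Fin n)) : ℝ :=
  -(c v * ⟪v, gradient φ x⟫_ℝ)

/-- Second corrector
`φ₂(x,v) = c(v)²·D²φ(x)[v,v] − (1/N)∫_{S^{n-1}} c(w)²·D²φ(x)[w,w] dσ(w)`. -/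
noncomputable def phi2 {n : ℕ} (c : EuclideanSpace ℝ (Fin n) → ℝ)
    (φ : EuclideanSpace ℝ (Fin n) → ℝ) (x v : EuclideanSpace ℝ (Fin n)) : ℝ :=
  c v ^ 2 * hessQF φ x v -
    (1 / sphN n) * ∫ w in Metric.sphere (0 : EuclideanSpace ℝ (Fin n)) 1,
      c w ^ 2 * hessQF φ x w ∂(sphMeasure n)

/-- Perturbed test function `φ^ε = φ + εφ₁ + ε²φ₂`. -/
noncomputable def phiEpsN {n : ℕ} (c : EuclideanSpace ℝ (Fin n) → ℝ) (ε : ℝ)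
    (φ : EuclideanSpace ℝ (Fin n) → ℝ) (x v : EuclideanSpace ℝ (Fin n)) : ℝ :=
  φ x + ε * phi1 c φ x v + ε ^ 2 * phi2 c φ x v

/-!
The generator is `L^ε = ε⁻²Q - ∇·(ε⁻¹u + u₁)` with `Q = Π - 1`, where `Π` is the mean over the
directions. Expand `L^ε(φ + εφ₁ + ε²φ₂)` in powers of `ε`: the correctors solve `Qφ₁ = Dφ(u)` and
`Qφ₂ = ΠD²φ(u,u) - D²φ(u,u)`, which is possible because both right-hand sides have mean zero,
the first one by the balance condition. As the solutions are chosen with mean zero, `Πφ^ε = φ`,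
the order `ε⁻¹` cancels, and the oscillation of `D²φ(u,u)` disappears from the order `ε⁰`.

On the sphere, `Π` makes sense because `0 < σ(S^{n-1}) < ∞`. The measure is finite since each
closed hemisphere is the image of a ball of dimension `n - 1` under the smooth inverse
stereographic projection, and positive since orthogonal projection onto a hyperplane is a
contraction whose image of the sphere contains an open ball.
-/

section RandomEvolution

variable {Θ E : Type*} [NormedAddCommGroup E] [NormedSpace ℝ E]

/-- The first corrector `φ₁ = -Dφ(u)` for a fast velocity field `u = c s`. -/
noncomputable def firstCorrector (u : Θ → E) (φ : E → ℝ) (x : E) (θ : Θ) : ℝ :=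
  -fderiv ℝ φ x (u θ)

lemma hasFDerivAt_firstCorrector {u : Θ → E} {φ : E → ℝ} {x : E}
    (hφ : DifferentiableAt ℝ (fderiv ℝ φ) x) (θ : Θ) :
    HasFDerivAt (fun y => firstCorrector u φ y θ) (-(fderiv ℝ (fderiv ℝ φ) x).flip (u θ)) x := by
  simpa using! (hφ.hasFDerivAt.clm_apply (hasFDerivAt_const (u θ) x)).neg

variable [MeasurableSpace Θ]

/-- The generator `ε⁻²Q + ε⁻¹S + S₁` of the random evolution which moves with velocity
`ε⁻¹u(θ) + u₁(θ)` and whose direction `θ` is resampled from `μ` at rate `ε⁻²`. Here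
`Qψ = ∫ ψ dμ - ψ`, and transport along `a` is `ψ ↦ -Dψ(a)`, with the minus sign of the paper. -/
noncomputable def evolutionGenerator (μ : Measure Θ) (u u₁ : Θ → E) (ε : ℝ)
    (ψ : E → Θ → ℝ) (x : E) (θ : Θ) : ℝ :=
  (ε ^ 2)⁻¹ * (∫ η, ψ x η ∂μ - ψ x θ)
    - ε⁻¹ * fderiv ℝ (fun y => ψ y θ) x (u θ) - fderiv ℝ (fun y => ψ y θ) x (u₁ θ)

/-- The second corrector `φ₂ = D²φ(u,u) - ∫ D²φ(u,u) dμ`, with the second derivative encoded as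
`fderiv ℝ (fderiv ℝ φ)`. -/
noncomputable def secondCorrector (μ : Measure Θ) (u : Θ → E) (φ : E → ℝ) (x : E) (θ : Θ) : ℝ :=
  fderiv ℝ (fderiv ℝ φ) x (u θ) (u θ) - ∫ η, fderiv ℝ (fderiv ℝ φ) x (u η) (u η) ∂μ

/-- The perturbed test function `φ^ε = φ + εφ₁ + ε²φ₂`. -/
noncomputable def perturbedTestFunction (μ : Measure Θ) (u : Θ → E) (ε : ℝ) (φ : E → ℝ)
    (x : E) (θ : Θ) : ℝ :=
  φ x + ε * firstCorrector u φ x θ + ε ^ 2 * secondCorrector μ u φ x θ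

variable {μ : Measure Θ} {u : Θ → E} {φ : E → ℝ} {x : E}

lemma integrable_apply_apply_of_memLp_two (hu : MemLp u 2 μ) (M : E →L[ℝ] E →L[ℝ] ℝ) :
    Integrable (fun θ => M (u θ) (u θ)) μ := by
  have hM : Continuous fun a => M a a := by fun_prop
  refine (hu.integrable_norm_pow two_ne_zero).const_mul ‖M‖ |>.mono'
    (hM.comp_aestronglyMeasurable hu.1) (.of_forall fun θ => ?_)
  simpa only [sq, mul_assoc] using M.le_opNorm₂ (u θ) (u θ)

lemma isBoundedLinearMap_integral_apply_apply (hu : MemLp u 2 μ) :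
    IsBoundedLinearMap ℝ fun M : E →L[ℝ] E →L[ℝ] ℝ => ∫ θ, M (u θ) (u θ) ∂μ := by
  have hint := integrable_apply_apply_of_memLp_two hu
  refine IsLinearMap.with_bound ⟨fun M M' => ?_, fun r M => ?_⟩ (∫ θ, ‖u θ‖ ^ 2 ∂μ) fun M => ?_
  · exact integral_add (hint M) (hint M')
  · exact integral_smul r _
  · rw [mul_comm, ← integral_const_mul]
    refine norm_integral_le_of_norm_le
      ((hu.integrable_norm_pow two_ne_zero).const_mul ‖M‖) (.of_forall fun θ => ?_)
    simpa only [sq, mul_assoc] using M.le_opNorm₂ (u θ) (u θ)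

lemma integral_firstCorrector [CompleteSpace E] (hu : Integrable u μ) (hbal : ∫ θ, u θ ∂μ = 0) :
    ∫ θ, firstCorrector u φ x θ ∂μ = 0 := by
  simp only [firstCorrector]
  rw [integral_neg, (fderiv ℝ φ x).integral_comp_comm hu, hbal, map_zero, neg_zero]

lemma integrable_secondCorrector [IsFiniteMeasure μ] (hu : MemLp u 2 μ) :
    Integrable (secondCorrector μ u φ x) μ :=
  (integrable_apply_apply_of_memLp_two hu _).sub (integrable_const _)

lemma integral_secondCorrector [IsProbabilityMeasure μ] (hu : MemLp u 2 μ) :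
    ∫ θ, secondCorrector μ u φ x θ ∂μ = 0 := by
  simp only [secondCorrector]
  rw [integral_sub (integrable_apply_apply_of_memLp_two hu _) (integrable_const _)]
  simp

lemma integral_perturbedTestFunction [CompleteSpace E] [IsProbabilityMeasure μ]
    (hu : MemLp u 2 μ) (hbal : ∫ θ, u θ ∂μ = 0) (ε : ℝ) :
    ∫ θ, perturbedTestFunction μ u ε φ x θ ∂μ = φ x := by
  have hu' : Integrable u μ := hu.integrable one_le_two
  have h₁ : Integrable (fun θ => ε * firstCorrector u φ x θ) μ :=
    ((fderiv ℝ φ x).integrable_comp hu').neg.const_mul ε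
  have h₂ : Integrable (fun θ => ε ^ 2 * secondCorrector μ u φ x θ) μ :=
    (integrable_secondCorrector hu).const_mul _
  have h₀₁ : Integrable (fun θ => φ x + ε * firstCorrector u φ x θ) μ :=
    (integrable_const _).add h₁
  simp only [perturbedTestFunction]
  rw [integral_add h₀₁ h₂, integral_add (integrable_const _) h₁, integral_const_mul,
    integral_const_mul, integral_firstCorrector hu' hbal, integral_secondCorrector hu]
  simp

lemma differentiableAt_secondCorrector (hu : MemLp u 2 μ)
    (hφ : DifferentiableAt ℝ (fderiv ℝ (fderiv ℝ φ)) x) (θ : Θ) :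
    DifferentiableAt ℝ (fun y => secondCorrector μ u φ y θ) x := by
  obtain ⟨meanForm, hmean⟩ : ∃ L : (E →L[ℝ] E →L[ℝ] ℝ) →L[ℝ] ℝ,
      ∀ M, L M = ∫ η, M (u η) (u η) ∂μ :=
    ⟨(isBoundedLinearMap_integral_apply_apply hu).toContinuousLinearMap, fun _ => rfl⟩
  simp only [secondCorrector, ← hmean]
  fun_prop

lemma fderiv_perturbedTestFunction_apply (hu : MemLp u 2 μ) (hφ : ContDiffAt ℝ 3 φ x)
    (ε : ℝ) (θ : Θ) (a : E) :
    fderiv ℝ (fun y => perturbedTestFunction μ u ε φ y θ) x a =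
      fderiv ℝ φ x a - ε * fderiv ℝ (fderiv ℝ φ) x a (u θ)
        + ε ^ 2 * fderiv ℝ (fun y => secondCorrector μ u φ y θ) x a := by
  have hφ₁ : ContDiffAt ℝ 2 (fderiv ℝ φ) x := hφ.fderiv_right (by norm_num)
  have hφ₂ : ContDiffAt ℝ 1 (fderiv ℝ (fderiv ℝ φ)) x := hφ₁.fderiv_right (by norm_num)
  have h₀ := (hφ.differentiableAt (by norm_num)).hasFDerivAt
  have h₁ := hasFDerivAt_firstCorrector (u := u) (hφ₁.differentiableAt (by norm_num)) θ
  have h₂ := (differentiableAt_secondCorrector hu (hφ₂.differentiableAt one_ne_zero) θ).hasFDerivAt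
  have h : HasFDerivAt (fun y => perturbedTestFunction μ u ε φ y θ) _ x :=
    (h₀.add (h₁.const_mul ε)).add (h₂.const_mul (ε ^ 2))
  simp [h.fderiv, sub_eq_add_neg]

theorem mnre_generator_on_perturbed_test_function_general [CompleteSpace E]
    [IsProbabilityMeasure μ] (hu : MemLp u 2 μ) (hbal : ∫ θ, u θ ∂μ = 0) (u₁ : Θ → E)
    (hφ : ContDiffAt ℝ 3 φ x) (θ : Θ) {ε : ℝ} (hε : ε ≠ 0) :
    evolutionGenerator μ u u₁ ε (perturbedTestFunction μ u ε φ) x θ =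
      (-fderiv ℝ φ x (u₁ θ) + ∫ η, fderiv ℝ (fderiv ℝ φ) x (u η) (u η) ∂μ)
        - ε * (fderiv ℝ (fun y => secondCorrector μ u φ y θ) x (u θ)
            - fderiv ℝ (fderiv ℝ φ) x (u₁ θ) (u θ))
        - ε ^ 2 * fderiv ℝ (fun y => secondCorrector μ u φ y θ) x (u₁ θ) := by
  simp only [evolutionGenerator, integral_perturbedTestFunction hu hbal,
    fderiv_perturbedTestFunction_apply hu hφ]
  simp only [perturbedTestFunction, firstCorrector, secondCorrector]
  field_simp
  ring

end RandomEvolution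

section SphereMeasure

open Metric Module

lemma hausdorffMeasure_image_lt_top_of_contDiff {E F : Type*} [NormedAddCommGroup E]
    [NormedSpace ℝ E] [FiniteDimensional ℝ E] [NormedAddCommGroup F] [NormedSpace ℝ F]
    [MeasurableSpace F] [BorelSpace F] {f : E → F} (hf : ContDiff ℝ 1 f) {K : Set E}
    (hK : IsCompact K) : μH[finrank ℝ E] (f '' K) < ⊤ := by
  borelize E
  obtain ⟨C, hC⟩ := hf.locallyLipschitz.locallyLipschitzOn.exists_lipschitzOnWith_of_compact hK
  refine (hC.hausdorffMeasure_image_le (Nat.cast_nonneg _)).trans_lt ?_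
  exact ENNReal.mul_lt_top (by simp) hK.measure_lt_top

variable {E : Type*} [NormedAddCommGroup E] [InnerProductSpace ℝ E]

lemma sphere_inter_halfSpace_subset_image_stereoInvFunAux {v : E} (hv : ‖v‖ = 1) :
    {x ∈ sphere (0 : E) 1 | ⟪v, x⟫_ℝ ≤ 0} ⊆
      (fun w : (ℝ ∙ v)ᗮ => stereoInvFunAux v w) '' closedBall 0 2 := by
  rintro x ⟨hx, hvx⟩
  have hne : x ≠ v := by
    rintro rfl
    norm_num [real_inner_self_eq_norm_sq, hv] at hvx
  refine ⟨stereoToFun v x, ?_,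
    congrArg Subtype.val (stereo_left_inv hv (x := ⟨x, hx⟩) hne)⟩
  have hproj : ‖(ℝ ∙ v)ᗮ.orthogonalProjectionOnto x‖ ≤ 1 :=
    (Submodule.norm_orthogonalProjectionOnto_apply_le _ x).trans_eq (by simpa using hx)
  have hscale : ‖2 / (1 - ⟪v, x⟫_ℝ)‖ ≤ 2 := by
    rw [Real.norm_of_nonneg (by bound)]
    exact div_le_self zero_le_two (by linarith)
  simpa [stereoToFun_apply, norm_smul] using
    mul_le_mul hscale hproj (norm_nonneg _) zero_le_two

lemma ball_subset_orthogonalProjectionOnto_image_sphere {v : E} (hv : ‖v‖ = 1) :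
    ball (0 : (ℝ ∙ v)ᗮ) 1 ⊆ (ℝ ∙ v)ᗮ.orthogonalProjectionOnto '' sphere (0 : E) 1 := by
  intro y hy
  have hy' : ‖y‖ < 1 := by simpa using hy
  have hyv : ⟪(y : E), v⟫_ℝ = 0 := Submodule.mem_orthogonal_singleton_iff_inner_left.1 y.2
  refine ⟨y + √(1 - ‖y‖ ^ 2) • v, ?_, ?_⟩
  · have hnorm : ‖(y : E) + √(1 - ‖y‖ ^ 2) • v‖ ^ 2 = 1 := by
      rw [norm_add_sq_real, inner_smul_right, hyv, norm_smul, hv, mul_one, Real.norm_eq_abs,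
        sq_abs, Real.sq_sqrt (by nlinarith [norm_nonneg y])]
      simp
    simpa using (pow_eq_one_iff_of_nonneg (norm_nonneg _) two_ne_zero).1 hnorm
  · have hv0 : (ℝ ∙ v)ᗮ.orthogonalProjectionOnto v = 0 :=
      Submodule.orthogonalProjectionOnto_orthogonal_apply_eq_zero
        (Submodule.mem_span_singleton_self v)
    simp [hv0]

variable [FiniteDimensional ℝ E]

lemma finrank_orthogonal_span_singleton_eq_sub_one {v : E} (hv : v ≠ 0) :
    (finrank ℝ (ℝ ∙ v)ᗮ : ℝ) = finrank ℝ E - 1 := by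
  have h := (ℝ ∙ v).finrank_add_finrank_orthogonal
  rw [finrank_span_singleton hv] at h
  rw [← h]
  push_cast
  ring

variable [MeasurableSpace E] [BorelSpace E]

lemma hausdorffMeasure_sphere_lt_top :
    μH[(finrank ℝ E : ℝ) - 1] (sphere (0 : E) 1) < ⊤ := by
  obtain hempty | ⟨v, hv⟩ := (sphere (0 : E) 1).eq_empty_or_nonempty
  · simp [hempty]
  have hemisphere_lt_top (w : E) (hw : ‖w‖ = 1) :
      μH[(finrank ℝ E : ℝ) - 1] {x ∈ sphere (0 : E) 1 | ⟪w, x⟫_ℝ ≤ 0} < ⊤ := by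
    rw [← finrank_orthogonal_span_singleton_eq_sub_one (norm_ne_zero_iff.1 (hw ▸ one_ne_zero))]
    exact (measure_mono (sphere_inter_halfSpace_subset_image_stereoInvFunAux hw)).trans_lt <|
      hausdorffMeasure_image_lt_top_of_contDiff
        (contDiff_stereoInvFunAux.comp (ℝ ∙ w)ᗮ.subtypeL.contDiff) (isCompact_closedBall 0 2)
  have hv' : ‖v‖ = 1 := by simpa using hv
  have hcover : sphere (0 : E) 1 ⊆
      {x ∈ sphere (0 : E) 1 | ⟪v, x⟫_ℝ ≤ 0} ∪ {x ∈ sphere (0 : E) 1 | ⟪-v, x⟫_ℝ ≤ 0} :=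
    fun x hx => (le_total ⟪v, x⟫_ℝ 0).imp (⟨hx, ·⟩) fun h => ⟨hx, by simpa using h⟩
  exact (measure_mono hcover).trans_lt <|
    measure_union_lt_top (hemisphere_lt_top v hv') (hemisphere_lt_top (-v) (by simpa))

lemma hausdorffMeasure_sphere_pos [Nontrivial E] :
    0 < μH[(finrank ℝ E : ℝ) - 1] (sphere (0 : E) 1) := by
  obtain ⟨v, hv⟩ := exists_norm_eq E zero_le_one
  have hcontraction := (ℝ ∙ v)ᗮ.lipschitzWith_orthogonalProjectionOnto.hausdorffMeasure_image_le
    (finrank ℝ (ℝ ∙ v)ᗮ).cast_nonneg (sphere (0 : E) 1)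
  rw [← finrank_orthogonal_span_singleton_eq_sub_one (norm_ne_zero_iff.1 (hv ▸ one_ne_zero))]
  calc
    0 < μH[finrank ℝ (ℝ ∙ v)ᗮ] (ball (0 : (ℝ ∙ v)ᗮ) 1) := measure_ball_pos _ _ one_pos
    _ ≤ μH[finrank ℝ (ℝ ∙ v)ᗮ] ((ℝ ∙ v)ᗮ.orthogonalProjectionOnto '' sphere (0 : E) 1) :=
      measure_mono (ball_subset_orthogonalProjectionOnto_image_sphere hv)
    _ ≤ μH[finrank ℝ (ℝ ∙ v)ᗮ] (sphere (0 : E) 1) := by simpa using hcontraction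

end SphereMeasure

section UniformSphere

open Metric ProbabilityTheory
open scoped ENNReal

lemma memLp_cond_of_continuousOn {X F : Type*} [TopologicalSpace X] [T2Space X] [MeasurableSpace X]
    [OpensMeasurableSpace X] [NormedAddCommGroup F]
    {f : X → F} {K : Set X} (hK : IsCompact K) (hf : ContinuousOn f K) (μ : Measure X)
    (p : ℝ≥0∞) : MemLp f p μ[|K] := by
  obtain ⟨C, hC⟩ := hK.exists_bound_of_continuousOn hf
  exact .of_bound ((hf.aestronglyMeasurable_of_isCompact hK hK.measurableSet).smul_measure _) C
    (ae_cond_of_forall_mem hK.measurableSet hC)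

/-- The uniform probability measure `σ / N` on the unit sphere of `ℝⁿ`, with respect to which the
paper's projector `Π` is the mean. It is the zero measure when `n = 0`. -/
noncomputable def uniformSphere (n : ℕ) : Measure (EuclideanSpace ℝ (Fin n)) :=
  (sphMeasure n)[|sphere 0 1]

variable {n : ℕ}

instance isProbabilityMeasure_uniformSphere [NeZero n] :
    IsProbabilityMeasure (uniformSphere n) := by
  have hpos := hausdorffMeasure_sphere_pos (E := EuclideanSpace ℝ (Fin n))
  have hfin := hausdorffMeasure_sphere_lt_top (E := EuclideanSpace ℝ (Fin n))
  rw [finrank_euclideanSpace_fin] at hpos hfin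
  exact cond_isProbabilityMeasure_of_finite hpos.ne' hfin.ne

lemma integral_uniformSphere {F : Type*} [NormedAddCommGroup F] [NormedSpace ℝ F]
    (f : EuclideanSpace ℝ (Fin n) → F) :
    ∫ w, f w ∂(uniformSphere n) = (1 / sphN n) • ∫ w in sphere 0 1, f w ∂(sphMeasure n) := by
  rw [uniformSphere, ProbabilityTheory.cond, integral_smul_measure, ENNReal.toReal_inv, one_div,
    sphN]

variable (c φ : EuclideanSpace ℝ (Fin n) → ℝ)

lemma sq_mul_hessQF (x v : EuclideanSpace ℝ (Fin n)) :
    c v ^ 2 * hessQF φ x v = fderiv ℝ (fderiv ℝ φ) x (c v • v) (c v • v) := by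
  simp [hessQF, iteratedFDeriv_two_apply, sq, mul_assoc]

lemma phi1_eq_firstCorrector : phi1 c φ = firstCorrector (fun w => c w • w) φ := by
  ext x v
  simp [phi1, firstCorrector]

lemma phi2_eq_secondCorrector :
    phi2 c φ = secondCorrector (uniformSphere n) (fun w => c w • w) φ := by
  ext x v
  simp only [phi2, secondCorrector, sq_mul_hessQF, integral_uniformSphere, smul_eq_mul]

lemma phiEpsN_eq_perturbedTestFunction (ε : ℝ) :
    phiEpsN c ε φ = perturbedTestFunction (uniformSphere n) (fun w => c w • w) ε φ := by
  ext x v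
  rw [phiEpsN, perturbedTestFunction, phi1_eq_firstCorrector, phi2_eq_secondCorrector]

end UniformSphere

/-- Lemma 3 of the paper, concrete form: the MNRE generator
`L^ε = ε⁻²Q + ε⁻¹c(θ)S(θ) + c₁(θ)S(θ)` applied to the perturbed test function `φ^ε` equals the
zero-order term `−c₁(v)⟨v,∇φ(x)⟩ + (1/N)∫c(w)²D²φ(x)[w,w]dσ(w)` plus remainders of orders `ε`
and `ε²`. -/
theorem mnre_generator_on_perturbed_test_function (n : ℕ) (hn : 2 ≤ n)
    (c c₁ : EuclideanSpace ℝ (Fin n) → ℝ) (hc : Continuous c) (hc₁ : Continuous c₁)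
    (hbal : ∫ w in Metric.sphere (0 : EuclideanSpace ℝ (Fin n)) 1,
      c w • w ∂(sphMeasure n) = 0)
    (φ : EuclideanSpace ℝ (Fin n) → ℝ) (hφ : ContDiff ℝ 3 φ)
    (x v : EuclideanSpace ℝ (Fin n))
    (hv : v ∈ Metric.sphere (0 : EuclideanSpace ℝ (Fin n)) 1)
    (ε : ℝ) (hε : ε ≠ 0) :
    (ε ^ 2)⁻¹ * ((1 / sphN n) *
          (∫ w in Metric.sphere (0 : EuclideanSpace ℝ (Fin n)) 1,
            phiEpsN c ε φ x w ∂(sphMeasure n)) - phiEpsN c ε φ x v)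
      - ε⁻¹ * c v * ⟪v, gradient (fun y => phiEpsN c ε φ y v) x⟫_ℝ
      - c₁ v * ⟪v, gradient (fun y => phiEpsN c ε φ y v) x⟫_ℝ =
    (-(c₁ v * ⟪v, gradient φ x⟫_ℝ) +
        (1 / sphN n) * ∫ w in Metric.sphere (0 : EuclideanSpace ℝ (Fin n)) 1,
          c w ^ 2 * hessQF φ x w ∂(sphMeasure n))
      - ε * (c v * ⟪v, gradient (fun y => phi2 c φ y v) x⟫_ℝ
          - c₁ v * c v * hessQF φ x v)
      - ε ^ 2 * (c₁ v * ⟪v, gradient (fun y => phi2 c φ y v) x⟫_ℝ) := by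
  have : NeZero n := ⟨by omega⟩
  have hu : MemLp (fun w => c w • w) 2 (uniformSphere n) :=
    memLp_cond_of_continuousOn (isCompact_sphere 0 1) (by fun_prop) _ _
  have hbal' : ∫ w, c w • w ∂(uniformSphere n) = 0 := by
    rw [integral_uniformSphere, hbal, smul_zero]
  have h := mnre_generator_on_perturbed_test_function_general hu hbal' (fun w => c₁ w • w)
    (hφ.contDiffAt (x := x)) v hε
  rw [← phiEpsN_eq_perturbedTestFunction, ← phi2_eq_secondCorrector] at h
  simp only [evolutionGenerator, ← sq_mul_hessQF, integral_uniformSphere] at h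
  simpa [hessQF, iteratedFDeriv_two_apply, mul_assoc, mul_left_comm] using h
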